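/- Define u : ℝ → ℝ by u(x) = (1 − √(1−x))/(1 + √(1−x)). Then for all real numbers r, r₀ with 0 < r ≤ r₀ < 1/2, one has ∫_{r}^{1/2} 1/( x · √(1−x) · (4 − log u(x)) ) dx ≥ log( (4 − log u(r₀)) / (4 − log u(1/2)) ), and the right-hand side is strictly positive. -/

import Mathlib

/-!
On `(0, 1)` one has `(log u)' = 1 / (x √(1 - x))`, because `1 - √(1 - x)² = x`. Hence
`-log (4 - log u)` is a primitive of the integrand, and the integral from `r` to `1/2` equals
`log (4 - log u(r)) - log (4 - log u(1/2))`. Since `u` is strictly increasing with values in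
`(0, 1)`, the function `4 - log u` is positive and strictly decreasing; this gives both the bound
for `r ≤ r₀` and the positivity for `r₀ < 1/2`.
-/

noncomputable def u (x : ℝ) : ℝ :=
  (1 - Real.sqrt (1 - x)) / (1 + Real.sqrt (1 - x))

lemma sqrt_one_sub_lt_one {x : ℝ} (h0 : 0 < x) : Real.sqrt (1 - x) < 1 := by
  rw [Real.sqrt_lt' one_pos]
  linarith

lemma u_pos {x : ℝ} (h0 : 0 < x) : 0 < u x := by
  have hs := sqrt_one_sub_lt_one h0
  have hs0 := Real.sqrt_nonneg (1 - x)
  exact div_pos (by linarith) (by linarith)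

lemma u_lt_u {x y : ℝ} (hxy : x < y) (hy : y < 1) : u x < u y := by
  have hs : Real.sqrt (1 - y) < Real.sqrt (1 - x) :=
    Real.sqrt_lt_sqrt (by linarith) (by linarith)
  have hx0 := Real.sqrt_nonneg (1 - x)
  have hy0 := Real.sqrt_nonneg (1 - y)
  unfold u
  rw [div_lt_div_iff₀ (by linarith) (by linarith)]
  nlinarith

lemma four_sub_log_u_pos {x : ℝ} (h0 : 0 < x) : 0 < 4 - Real.log (u x) := by
  have hs0 := Real.sqrt_nonneg (1 - x)
  have hu : u x ≤ 1 := by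
    unfold u
    rw [div_le_one (by linarith)]
    linarith
  have := Real.log_nonpos (u_pos h0).le hu
  linarith

lemma four_sub_log_u_lt {x y : ℝ} (h0 : 0 < x) (hxy : x < y) (hy : y < 1) :
    4 - Real.log (u y) < 4 - Real.log (u x) := by
  have := Real.log_lt_log (u_pos h0) (u_lt_u hxy hy)
  linarith

lemma hasDerivAt_log_u {x : ℝ} (h0 : 0 < x) (h1 : x < 1) :
    HasDerivAt (fun x => Real.log (u x)) (1 / (x * Real.sqrt (1 - x))) x := by
  have hs : 0 < Real.sqrt (1 - x) := Real.sqrt_pos.2 (by linarith)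
  have hs1 := sqrt_one_sub_lt_one h0
  have hsq : Real.sqrt (1 - x) ^ 2 = 1 - x := Real.sq_sqrt (by linarith)
  have hd : HasDerivAt (fun x : ℝ => Real.sqrt (1 - x)) (-1 / (2 * Real.sqrt (1 - x))) x :=
    ((hasDerivAt_id x).const_sub 1).sqrt (by simp only [id]; linarith)
  have hu := ((hd.const_sub 1).div (hd.const_add 1) (by linarith)).log (u_pos h0).ne'
  refine hu.congr_deriv ?_
  simp only [Pi.div_apply]
  generalize Real.sqrt (1 - x) = s at *
  obtain rfl : x = (1 - s) * (1 + s) := by linarith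
  have h2 : 1 - s ≠ 0 := by linarith
  have h3 : 1 + s ≠ 0 := by linarith
  field_simp
  ring

theorem integral_lower_bound (r r₀ : ℝ) (hr0 : 0 < r) (hrr0 : r ≤ r₀)
    (hr0half : r₀ < 1 / 2) :
    (∫ x in r..(1 / 2 : ℝ),
        1 / (x * Real.sqrt (1 - x) * (4 - Real.log (u x)))) ≥
      Real.log ((4 - Real.log (u r₀)) / (4 - Real.log (u (1 / 2)))) ∧
    0 < Real.log ((4 - Real.log (u r₀)) / (4 - Real.log (u (1 / 2)))) := by
  have hr₀ : 0 < r₀ := hr0.trans_le hrr0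
  have hhalf : 0 < 4 - Real.log (u (1 / 2)) := four_sub_log_u_pos (by norm_num)
  have hmem : ∀ x ∈ Set.uIcc r (1 / 2 : ℝ), 0 < x ∧ x < 1 := by
    intro x hx
    rw [Set.uIcc_of_le (by linarith)] at hx
    exact ⟨by linarith [hx.1], by linarith [hx.2]⟩
  refine ⟨?_, Real.log_pos ?_⟩
  · have hderiv : ∀ x ∈ Set.uIcc r (1 / 2 : ℝ),
        HasDerivAt (fun x => -Real.log (4 - Real.log (u x)))
          (1 / (x * Real.sqrt (1 - x) * (4 - Real.log (u x)))) x := by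
      intro x hx
      obtain ⟨h0, h1⟩ := hmem x hx
      refine ((((hasDerivAt_log_u h0 h1).const_sub 4).log
        (four_sub_log_u_pos h0).ne').neg).congr_deriv ?_
      rw [neg_div, neg_neg, div_div]
    have hcont : ContinuousOn (fun x => 1 / (x * Real.sqrt (1 - x) * (4 - Real.log (u x))))
        (Set.uIcc r (1 / 2 : ℝ)) := by
      have hlog : ContinuousOn (fun x => Real.log (u x)) (Set.uIcc r (1 / 2 : ℝ)) :=
        fun x hx => (hasDerivAt_log_u (hmem x hx).1
          (hmem x hx).2).continuousAt.continuousWithinAt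
      refine continuousOn_const.div (by fun_prop) fun x hx => ?_
      obtain ⟨h0, h1⟩ := hmem x hx
      have hs : 0 < Real.sqrt (1 - x) := Real.sqrt_pos.2 (by linarith)
      exact (mul_pos (mul_pos h0 hs) (four_sub_log_u_pos h0)).ne'
    rw [intervalIntegral.integral_eq_sub_of_hasDerivAt hderiv hcont.intervalIntegrable,
      Real.log_div (four_sub_log_u_pos hr₀).ne' hhalf.ne']
    have hle : 4 - Real.log (u r₀) ≤ 4 - Real.log (u r) := by
      rcases hrr0.eq_or_lt with rfl | h
      · exact le_rfl
      · exact (four_sub_log_u_lt hr0 h (by linarith)).le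
    have := Real.log_le_log (four_sub_log_u_pos hr₀) hle
    linarith
  · rw [one_lt_div hhalf]
    exact four_sub_log_u_lt hr₀ hr0half (by norm_num)
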